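/- Let K be a field, B = K[x_1,…,x_n] with n > 0, and φ: B → B a K-algebra endomorphism with φ(x_i) = f_i, where f_1, …, f_n are algebraically independent over K. Let A = φ(B), and let K(A) ⊆ K(B) be the induced extension of fraction fields. Then [K(B) : K(A)] ≤ deg(φ)^n. -/

import Mathlib

/-- The degree of a `K`-algebra endomorphism `φ` of the polynomial ring `K[x_1, …, x_n]`:
`deg(φ) = max {deg f_1, …, deg f_n}` where `f_i = φ(x_i)` and `deg` is total degree. -/
noncomputable def polyDeg {K : Type*} [CommSemiring K] {n : ℕ}
    (φ : MvPolynomial (Fin n) K →ₐ[K] MvPolynomial (Fin n) K) : ℕ :=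
  Finset.univ.sup fun i : Fin n => (φ (MvPolynomial.X i)).totalDegree

/-!
Filter `B = K[x_1, …, x_n]` by total degree; the degree `≤ N` part has dimension
`(N + n).choose n`. If `w_1, …, w_m ∈ B` are linearly independent over `A = φ(B)` and have degree
at most `c`, then `(p_i) ↦ ∑ φ(p_i) w_i` is injective and sends `m`-tuples of polynomials of
degree `≤ N` to polynomials of degree `≤ deg(φ) N + c`. Comparing dimensions as `N → ∞` gives
`m ≤ deg(φ)^n`. Clearing denominators turns a finite family in `K(B)` that is linearly independent
over `K(A)` into such a family in `B`.
-/

section Growth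

open Filter

theorem le_pow_of_forall_mul_pow_le {m d c n : ℕ} (h : ∀ N, m * N ^ n ≤ (d * N + c) ^ n) :
    m ≤ d ^ n := by
  have h_lim : Tendsto (fun N : ℕ ↦ (d + c / N : ℝ) ^ n) atTop (nhds ((d + 0 : ℝ) ^ n)) :=
    ((tendsto_const_div_atTop_nhds_zero_nat _).const_add _).pow _
  have h_le : ∀ᶠ N : ℕ in atTop, (m : ℝ) ≤ (d + c / N : ℝ) ^ n := by
    filter_upwards [eventually_gt_atTop 0] with N hN
    have hN' : (0 : ℝ) < N := Nat.cast_pos.2 hN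
    rw [add_div' _ _ _ hN'.ne', div_pow, le_div_iff₀ (by positivity)]
    exact_mod_cast h N
  have h_cast : (m : ℝ) ≤ (d + 0) ^ n := ge_of_tendsto h_lim h_le
  rw [add_zero] at h_cast
  exact_mod_cast h_cast

theorem le_pow_of_forall_mul_choose_le {m d c n : ℕ}
    (h : ∀ N, m * (N + n).choose n ≤ (d * N + c + n).choose n) : m ≤ d ^ n := by
  refine le_pow_of_forall_mul_pow_le (c := c + n) fun N ↦ ?_
  calc m * N ^ n ≤ m * (N + 1).ascFactorial n := by
        gcongr
        exact (Nat.pow_le_pow_left N.le_succ n).trans (Nat.pow_succ_le_ascFactorial _ _)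
    _ = n.factorial * (m * (N + n).choose n) := by
        rw [Nat.ascFactorial_eq_factorial_mul_choose, mul_left_comm]
    _ ≤ n.factorial * (d * N + c + n).choose n := Nat.mul_le_mul_left _ (h N)
    _ = (d * N + c + 1).ascFactorial n := (Nat.ascFactorial_eq_factorial_mul_choose _ _).symm
    _ ≤ (d * N + c + n) ^ n := Nat.ascFactorial_le_pow_add _ _
    _ = (d * N + (c + n)) ^ n := by rw [add_assoc]

end Growth

open MvPolynomial

section TotalDegree

variable {R σ τ : Type*}

theorem totalDegree_algHom_le [CommSemiring R] {d : ℕ}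
    {φ : MvPolynomial σ R →ₐ[R] MvPolynomial τ R} (hd : ∀ i, (φ (X i)).totalDegree ≤ d)
    (p : MvPolynomial σ R) : (φ p).totalDegree ≤ d * p.totalDegree := by
  rw [aeval_unique φ, aeval_def, eval₂_eq]
  refine totalDegree_finsetSum_le fun s hs ↦ ?_
  rw [algebraMap_eq, C_mul']
  calc (coeff s p • ∏ i ∈ s.support, (φ (X i)) ^ s i).totalDegree
      ≤ ∑ i ∈ s.support, (φ (X i) ^ s i).totalDegree :=
        (totalDegree_smul_le _ _).trans (totalDegree_finsetProd _ _)
    _ ≤ ∑ i ∈ s.support, d * s i := by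
        gcongr with i
        exact (totalDegree_pow _ _).trans ((Nat.mul_le_mul_left _ (hd i)).trans_eq (mul_comm _ _))
    _ = d * s.sum fun _ e ↦ e := (Finset.mul_sum _ _ _).symm
    _ ≤ d * p.totalDegree := Nat.mul_le_mul_left _ (le_totalDegree hs)

theorem natCard_finsupp_sum_le [Fintype σ] (N : ℕ) :
    Nat.card {s : σ →₀ ℕ | (s.sum fun _ e ↦ e) ≤ N} =
      (N + Fintype.card σ).choose (Fintype.card σ) := by
  classical
  have h_union : {s : σ →₀ ℕ | (s.sum fun _ e ↦ e) ≤ N} =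
      ((Finset.range (N + 1)).biUnion Finset.univ.finsuppAntidiag : Finset (σ →₀ ℕ)) := by
    ext s
    simp [Finsupp.sum_fintype]
  have h_disjoint : Pairwise fun k l : ℕ ↦ Disjoint
      (Finset.univ.finsuppAntidiag k : Finset (σ →₀ ℕ)) (Finset.univ.finsuppAntidiag l) :=
    fun k l hkl ↦ Finset.disjoint_left.2 fun s hk hl ↦
      hkl ((Finset.mem_finsuppAntidiag.1 hk).1.symm.trans (Finset.mem_finsuppAntidiag.1 hl).1)
  rw [h_union, Nat.card_coe_set_eq, Set.ncard_coe_finset,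
    Finset.card_biUnion fun k _ l _ hkl ↦ h_disjoint hkl]
  simp only [Finset.card_finsuppAntidiag_nat_eq_multichoose, Finset.card_univ,
    Nat.sum_range_multichoose]

theorem finrank_restrictTotalDegree [CommRing R] [Nontrivial R] [Fintype σ] (N : ℕ) :
    Module.finrank R (restrictTotalDegree σ R N) =
      (N + Fintype.card σ).choose (Fintype.card σ) :=
  (Module.finrank_eq_nat_card_basis (basisRestrictSupport R _)).trans (natCard_finsupp_sum_le N)

theorem totalDegree_apply_X_le_polyDeg [CommSemiring R] {n : ℕ}
    (φ : MvPolynomial (Fin n) R →ₐ[R] MvPolynomial (Fin n) R) (i : Fin n) :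
    (φ (X i)).totalDegree ≤ polyDeg φ :=
  Finset.le_sup (f := fun i ↦ (φ (X i)).totalDegree) (Finset.mem_univ i)

end TotalDegree

section RankOverRange

variable {R σ τ : Type*} [CommRing R]

theorem card_mul_choose_le_choose_of_linearIndependent_range [Nontrivial R] [Fintype σ] [Fintype τ]
    {φ : MvPolynomial σ R →ₐ[R] MvPolynomial τ R} (hφ : Function.Injective φ)
    {d : ℕ} (hd : ∀ i, (φ (X i)).totalDegree ≤ d)
    {ι : Type*} [Fintype ι] {w : ι → MvPolynomial τ R} (hw : LinearIndependent φ.range w)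
    {c : ℕ} (hc : ∀ i, (w i).totalDegree ≤ c) (N : ℕ) :
    Fintype.card ι * (N + Fintype.card σ).choose (Fintype.card σ) ≤
      (d * N + c + Fintype.card τ).choose (Fintype.card τ) := by
  let f : restrictTotalDegree σ R N →ₗ[R] φ.range :=
    φ.rangeRestrict.toLinearMap ∘ₗ Submodule.subtype _
  let T : (ι → restrictTotalDegree σ R N) →ₗ[R] MvPolynomial τ R :=
    (Fintype.linearCombination φ.range w).restrictScalars R ∘ₗ f.compLeft ι
  have hT_inj : Function.Injective T := by
    have hf : Function.Injective f :=
      ((φ.injective_codRestrict _ _).2 hφ).comp Subtype.val_injective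
    exact hw.fintypeLinearCombination_injective.comp hf.comp_left
  have hT_mem (p) : T p ∈ restrictTotalDegree τ R (d * N + c) := by
    rw [mem_restrictTotalDegree]
    refine totalDegree_finsetSum_le fun i _ ↦ (totalDegree_mul _ _).trans (add_le_add ?_ (hc i))
    exact (totalDegree_algHom_le hd _).trans
      (Nat.mul_le_mul_left d ((mem_restrictTotalDegree _ _ _).1 (p i).2))
  have : Module.Free R (restrictTotalDegree σ R N) := .of_basis (basisRestrictSupport R _)
  have h_finrank := LinearMap.finrank_le_finrank_of_injective
    ((LinearMap.injective_codRestrict_iff (hf := hT_mem)).2 hT_inj)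
  simpa [Module.finrank_pi_fintype, finrank_restrictTotalDegree] using h_finrank

theorem rank_range_le_pow [Nontrivial R] [Fintype σ]
    {φ : MvPolynomial σ R →ₐ[R] MvPolynomial σ R} (hφ : Function.Injective φ)
    {d : ℕ} (hd : ∀ i, (φ (X i)).totalDegree ≤ d) :
    Module.rank φ.range (MvPolynomial σ R) ≤ ((d ^ Fintype.card σ : ℕ) : Cardinal) := by
  refine rank_le fun s hs ↦ le_pow_of_forall_mul_choose_le (c := s.sup totalDegree) fun N ↦ ?_
  simpa using card_mul_choose_le_choose_of_linearIndependent_range hφ hd hs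
    (fun i ↦ Finset.le_sup i.2) N

end RankOverRange

section Localization

variable {A B L : Type*} [CommRing A] [CommRing B] [CommRing L] [Algebra A B] [Algebra B L]
  [Algebra A L] [IsScalarTower A B L]

theorem exists_linearIndependent_of_isLocalization (S : Submonoid B) [IsLocalization S L]
    {ι : Type*} [Finite ι] {v : ι → L} (hv : LinearIndependent A v) :
    ∃ w : ι → B, LinearIndependent A w := by
  obtain ⟨b, hb⟩ := IsLocalization.exist_integer_multiples_of_finite S v
  choose w hw using hb
  have h_unit : IsUnit (algebraMap B L b) := IsLocalization.map_units L b
  have hbv : LinearIndependent A (LinearMap.mulLeft A (algebraMap B L b) ∘ v) :=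
    hv.map' _ (LinearMap.ker_eq_bot.2 h_unit.mul_right_injective)
  have hw_eq : LinearMap.mulLeft A (algebraMap B L b) ∘ v = IsScalarTower.toAlgHom A B L ∘ w :=
    funext fun i ↦ ((hw i).trans (Algebra.smul_def _ _)).symm
  exact ⟨w, .of_comp (IsScalarTower.toAlgHom A B L).toLinearMap (hw_eq ▸ hbv)⟩

theorem rank_le_natCast_of_isLocalization [Nontrivial A] (S : Submonoid B) [IsLocalization S L]
    {m : ℕ} (h : Module.rank A B ≤ m) : Module.rank A L ≤ m := by
  refine rank_le fun s hs ↦ ?_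
  obtain ⟨w, hw⟩ := exists_linearIndependent_of_isLocalization S hs
  simpa using hw.cardinal_lift_le_rank.trans (Cardinal.lift_le.2 h)

end Localization

theorem rank_subfieldClosure_image_le {R B L : Type*} [CommSemiring R] [CommRing B] [Algebra R B]
    [Field L] [Algebra B L] [FaithfulSMul B L] (A : Subalgebra R B) :
    Module.rank (Subfield.closure (algebraMap B L '' A)) L ≤ Module.rank A L := by
  let i : A →+* Subfield.closure (algebraMap B L '' A) :=
    ((algebraMap B L).comp A.val).codRestrict _ fun a ↦
      Subfield.subset_closure (Set.mem_image_of_mem _ a.2)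
  have hi : Function.Injective i :=
    RingHom.injective_codRestrict.2
      ((FaithfulSMul.algebraMap_injective B L).comp Subtype.val_injective)
  exact Algebra.rank_le_of_injective_injective i (RingHom.id L) hi Function.injective_id rfl

theorem polynomial_fraction_field_degree_bound_general {R σ L : Type*} [CommRing R] [Fintype σ]
    [Field L] [Algebra (MvPolynomial σ R) L] [IsFractionRing (MvPolynomial σ R) L]
    {φ : MvPolynomial σ R →ₐ[R] MvPolynomial σ R}
    (hind : AlgebraicIndependent R fun i ↦ φ (X i))
    {d : ℕ} (hd : ∀ i, (φ (X i)).totalDegree ≤ d) :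
    Module.rank (Subfield.closure (algebraMap (MvPolynomial σ R) L '' φ.range)) L ≤
      (d : Cardinal) ^ Fintype.card σ := by
  have : Nontrivial R := ((algebraMap (MvPolynomial σ R) L).comp C).domain_nontrivial
  have hφ : Function.Injective φ := by
    rw [aeval_unique φ]
    exact hind
  have h_rank : Module.rank φ.range L ≤ (d ^ Fintype.card σ : ℕ) :=
    rank_le_natCast_of_isLocalization (nonZeroDivisors (MvPolynomial σ R)) (rank_range_le_pow hφ hd)
  exact_mod_cast (rank_subfieldClosure_image_le φ.range).trans h_rank

open MvPolynomial in
/-- Let `K` be a field, `B = K[x_1, …, x_n]` with `n > 0`, and `φ : B → B`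
a `K`-algebra endomorphism with `φ(x_i) = f_i` algebraically independent over `K`.  Let
`A = φ(B)` and let `K(A) ⊆ K(B)` be the induced extension of fraction fields (realized as
the subfield of `K(B) = FractionRing B` generated by the image of `A`).  Then
`[K(B) : K(A)] ≤ deg(φ)^n`. -/
theorem polynomial_fraction_field_degree_bound (K : Type*) [Field K] (n : ℕ) (hn : 0 < n)
    (φ : MvPolynomial (Fin n) K →ₐ[K] MvPolynomial (Fin n) K)
    (hind : AlgebraicIndependent K fun i => φ (X i)) :
    Module.rank
      (Subfield.closure
        (algebraMap (MvPolynomial (Fin n) K) (FractionRing (MvPolynomial (Fin n) K)) ''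
          (φ.range : Set (MvPolynomial (Fin n) K))))
      (FractionRing (MvPolynomial (Fin n) K))
      ≤ ((polyDeg φ : Cardinal) ^ n) := by
  simpa using polynomial_fraction_field_degree_bound_general hind (totalDegree_apply_X_le_polyDeg φ)
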